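/- There exists a constant C > 0 such that for every t > 0 and every Schwartz function f : ℝ³ → ℂ, the L⁶ norm satisfies (∫_{ℝ³} |f(x)|⁶ dx)^{1/6} ≤ (C/t) (∫_{ℝ³} ‖x f(x) + 2it ∇f(x)‖²_{ℂ³} dx)^{1/2}. -/

import Mathlib

open MeasureTheory SchwartzMap

noncomputable section

/-- Partial derivative in the `i`-th coordinate direction. -/
def pd {n : ℕ} (f : EuclideanSpace ℝ (Fin n) → ℂ) (i : Fin n)
    (x : EuclideanSpace ℝ (Fin n)) : ℂ :=
  fderiv ℝ f x (EuclideanSpace.single i 1)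

/-!
Multiplication by the phase `exp (-i|x|² / 4t)` does not change `|f|`, but turns the gradient into
the conformal factor: `x f + 2it ∇f = 2it exp (i|x|² / 4t) ∇(exp (-i|x|² / 4t) f)`. The bound is
therefore the Sobolev inequality for `exp (-i|x|² / 4t) f`, with the factor `1/t` coming from this
identity. Mathlib has the Sobolev inequality for compactly supported functions; it extends to
functions in `Lᵖ` because cutting off at scale `n` costs only `O(1/n) ‖u‖ₚ` in the gradient.
-/

open Filter Topology Module
open scoped NNReal ENNReal InnerProductSpace LineDeriv

section Sobolev

variable {E F : Type*} [NormedAddCommGroup E] [NormedSpace ℝ E]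

variable (E) in
lemma exists_cutoff_seq [FiniteDimensional ℝ E] : ∃ (χ : ℕ → E → ℝ) (δ : ℕ → ℝ),
    (∀ n, ContDiff ℝ 1 (χ n)) ∧ (∀ n, HasCompactSupport (χ n)) ∧ (∀ n x, ‖χ n x‖ ≤ 1) ∧
    (∀ n x, ‖fderiv ℝ (χ n) x‖ ≤ δ n) ∧ (∀ x, Tendsto (χ · x) atTop (𝓝 1)) ∧
    Tendsto δ atTop (𝓝 0) := by
  let φ : ContDiffBump (0 : E) := ⟨1, 2, one_pos, one_lt_two⟩
  have hφ : ContDiff ℝ 1 φ := φ.contDiff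
  obtain ⟨M, hM⟩ := (φ.hasCompactSupport.fderiv (𝕜 := ℝ)).exists_bound_of_continuous
    (hφ.continuous_fderiv one_ne_zero)
  let ε (n : ℕ) : ℝ := 1 / ((n : ℝ) + 1)
  have hε_pos (n : ℕ) : 0 < ε n := Nat.one_div_pos_of_nat
  have hε : Tendsto ε atTop (𝓝 0) := tendsto_one_div_add_atTop_nhds_zero_nat
  refine ⟨fun n x ↦ φ (ε n • x), fun n ↦ ε n * M, fun n ↦ hφ.comp (contDiff_const_smul _),
    fun n ↦ φ.hasCompactSupport.comp_smul (hε_pos n).ne', fun n x ↦ ?_, fun n x ↦ ?_,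
    fun x ↦ ?_, ?_⟩
  · rw [Real.norm_of_nonneg φ.nonneg]
    exact φ.le_one
  · rw [fderiv_comp_smul, norm_smul, Real.norm_of_nonneg (hε_pos n).le]
    exact mul_le_mul_of_nonneg_left (hM _) (hε_pos n).le
  · have hφ_zero : φ 0 = 1 := φ.one_of_mem_closedBall (Metric.mem_closedBall_self zero_le_one)
    have hεx : Tendsto (fun n ↦ ε n • x) atTop (𝓝 0) := by
      simpa only [zero_smul] using hε.smul_const x
    exact hφ_zero ▸ (hφ.continuous.tendsto 0).comp hεx
  · simpa only [zero_mul] using hε.mul_const M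

variable [MeasurableSpace E] [BorelSpace E]

lemma eLpNorm_fderiv_smul_le [NormedAddCommGroup F] [NormedSpace ℝ F] {μ : Measure E}
    {χ : E → ℝ} {u : E → F} {p : ℝ≥0∞} {δ : ℝ} (hp : 1 ≤ p)
    (hχ : Differentiable ℝ χ) (hχ_le : ∀ x, ‖χ x‖ ≤ 1) (hχ_fderiv : ∀ x, ‖fderiv ℝ χ x‖ ≤ δ)
    (hu : ContDiff ℝ 1 u) :
    eLpNorm (fderiv ℝ (χ • u)) p μ ≤
      eLpNorm (fderiv ℝ u) p μ + ENNReal.ofReal δ * eLpNorm u p μ := by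
  have hδ : 0 ≤ δ := (norm_nonneg _).trans (hχ_fderiv 0)
  have pointwise (x : E) : ‖fderiv ℝ (χ • u) x‖ ≤ ‖fderiv ℝ u x‖ + δ * ‖u x‖ :=
    calc ‖fderiv ℝ (χ • u) x‖
        = ‖χ x • fderiv ℝ u x + (fderiv ℝ χ x).smulRight (u x)‖ := by
          rw [fderiv_smul (hχ x) (hu.differentiable one_ne_zero x)]
      _ ≤ ‖χ x‖ * ‖fderiv ℝ u x‖ + ‖fderiv ℝ χ x‖ * ‖u x‖ := by
          grw [norm_add_le, norm_smul, ContinuousLinearMap.norm_smulRight_apply]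
      _ ≤ ‖fderiv ℝ u x‖ + δ * ‖u x‖ := by
          grw [hχ_le x, hχ_fderiv x, one_mul]
  calc eLpNorm (fderiv ℝ (χ • u)) p μ
      ≤ eLpNorm ((fun x ↦ ‖fderiv ℝ u x‖) + δ • fun x ↦ ‖u x‖) p μ := eLpNorm_mono_real pointwise
    _ ≤ eLpNorm (fun x ↦ ‖fderiv ℝ u x‖) p μ + eLpNorm (δ • fun x ↦ ‖u x‖) p μ :=
        eLpNorm_add_le (hu.continuous_fderiv one_ne_zero).norm.aestronglyMeasurable
          (hu.continuous.norm.const_smul δ).aestronglyMeasurable hp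
    _ = eLpNorm (fderiv ℝ u) p μ + ENNReal.ofReal δ * eLpNorm u p μ := by
        rw [eLpNorm_const_smul, eLpNorm_norm, eLpNorm_norm, Real.enorm_of_nonneg hδ]

theorem eLpNorm_le_eLpNorm_fderiv_of_memLp [FiniteDimensional ℝ E] [NormedAddCommGroup F]
    [InnerProductSpace ℝ F] (μ : Measure E) [μ.IsAddHaarMeasure] {u : E → F} {p p' : ℝ≥0}
    (hp : 1 ≤ p) (hE : 0 < finrank ℝ E) (hp' : (p' : ℝ)⁻¹ = p⁻¹ - (finrank ℝ E : ℝ)⁻¹)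
    (hu : ContDiff ℝ 1 u) (hu_memLp : MemLp u p μ) :
    eLpNorm u p' μ ≤ eLpNormLESNormFDerivOfEqInnerConst μ p * eLpNorm (fderiv ℝ u) p μ := by
  obtain ⟨χ, δ, hχ, hχ_supp, hχ_le, hχ_fderiv, hχ_lim, hδ⟩ := exists_cutoff_seq E
  let K : ℝ≥0 := eLpNormLESNormFDerivOfEqInnerConst μ p
  have sobolev_cutoff (n : ℕ) : eLpNorm (χ n • u) p' μ ≤
      K * (eLpNorm (fderiv ℝ u) p μ + ENNReal.ofReal (δ n) * eLpNorm u p μ) := by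
    grw [eLpNorm_le_eLpNorm_fderiv_of_eq_inner μ ((hχ n).smul hu) (hχ_supp n).smul_right hp hE hp',
      eLpNorm_fderiv_smul_le (mod_cast hp) ((hχ n).differentiable one_ne_zero) (hχ_le n)
        (hχ_fderiv n) hu]
  have bound_lim : Tendsto
      (fun n ↦ K * (eLpNorm (fderiv ℝ u) p μ + ENNReal.ofReal (δ n) * eLpNorm u p μ)) atTop
      (𝓝 (K * eLpNorm (fderiv ℝ u) p μ)) := by
    have error_lim : Tendsto (fun n ↦ ENNReal.ofReal (δ n) * eLpNorm u p μ) atTop (𝓝 0) := by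
      simpa only [ENNReal.ofReal_zero, zero_mul] using
        ENNReal.Tendsto.mul_const (ENNReal.tendsto_ofReal hδ) (Or.inr hu_memLp.eLpNorm_ne_top)
    simpa only [add_zero] using
      ENNReal.Tendsto.const_mul (error_lim.const_add _) (Or.inr ENNReal.coe_ne_top)
  calc eLpNorm u p' μ
      ≤ liminf (fun n ↦ eLpNorm (χ n • u) p' μ) atTop :=
        Lp.eLpNorm_lim_le_liminf_eLpNorm
          (fun n ↦ ((hχ n).continuous.smul hu.continuous).aestronglyMeasurable) u
          (.of_forall fun x ↦ by simpa only [one_smul] using! (hχ_lim x).smul_const (u x))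
    _ ≤ liminf (fun n ↦ K * (eLpNorm (fderiv ℝ u) p μ + ENNReal.ofReal (δ n) * eLpNorm u p μ))
          atTop := liminf_le_liminf (.of_forall sobolev_cutoff)
    _ = K * eLpNorm (fderiv ℝ u) p μ := bound_lim.liminf_eq

end Sobolev

lemma opNorm_le_sqrt_sum_sq_norm_apply {𝕜 ι E F : Type*} [RCLike 𝕜] [Fintype ι]
    [NormedAddCommGroup E] [InnerProductSpace 𝕜 E] [SeminormedAddCommGroup F] [NormedSpace 𝕜 F]
    (b : OrthonormalBasis ι 𝕜 E) (L : E →L[𝕜] F) : ‖L‖ ≤ √(∑ i, ‖L (b i)‖ ^ 2) := by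
  refine L.opNorm_le_bound (Real.sqrt_nonneg _) fun x ↦ ?_
  calc ‖L x‖ = ‖∑ i, ⟪b i, x⟫_𝕜 • L (b i)‖ := by
        conv_lhs => rw [← b.sum_repr' x, map_sum]
        simp only [map_smul]
    _ ≤ ∑ i, ‖L (b i)‖ * ‖⟪b i, x⟫_𝕜‖ := by
        grw [norm_sum_le]
        simp only [norm_smul, mul_comm, le_refl]
    _ ≤ √(∑ i, ‖L (b i)‖ ^ 2) * √(∑ i, ‖⟪b i, x⟫_𝕜‖ ^ 2) := Real.sum_mul_le_sqrt_mul_sqrt _ _ _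
    _ = √(∑ i, ‖L (b i)‖ ^ 2) * ‖x‖ := by
        rw [b.sum_sq_norm_inner_right, Real.sqrt_sq (norm_nonneg x)]

section GalileanPhase

variable {E : Type*} [NormedAddCommGroup E]

/-- The quadratic phase `exp (-i|x|² / 4t)`, which conjugates the conformal factor `x + 2it∇`
into `2it∇`. -/
def galileanPhase (t : ℝ) (x : E) : ℂ :=
  Complex.exp ((-‖x‖ ^ 2 / (4 * t) : ℝ) * Complex.I)

lemma norm_galileanPhase (t : ℝ) (x : E) : ‖galileanPhase t x‖ = 1 :=
  Complex.norm_exp_ofReal_mul_I _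

lemma norm_galileanPhase_mul (t : ℝ) (x : E) (z : ℂ) : ‖galileanPhase t x * z‖ = ‖z‖ := by
  rw [norm_mul, norm_galileanPhase, one_mul]

variable [InnerProductSpace ℝ E]

lemma contDiff_galileanPhase (t : ℝ) {k : WithTop ℕ∞} : ContDiff ℝ k (galileanPhase t : E → ℂ) :=
  Complex.contDiff_exp.comp <|
    (Complex.ofRealCLM.contDiff.comp ((contDiff_norm_sq ℝ).neg.div_const _)).mul contDiff_const

lemma fderiv_galileanPhase_apply (t : ℝ) (x v : E) :
    fderiv ℝ (galileanPhase t) x v =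
      galileanPhase t x * (-(Complex.I / (2 * t)) * (⟪x, v⟫_ℝ : ℂ)) := by
  have hexponent := (Complex.ofRealCLM.hasFDerivAt.comp x
    ((hasStrictFDerivAt_norm_sq x).hasFDerivAt.neg.mul_const (4 * t)⁻¹)).mul_const Complex.I
  have hphase : HasFDerivAt (galileanPhase t) (galileanPhase t x •
      Complex.I • Complex.ofRealCLM ∘L ((4 * t)⁻¹ • -(2 • innerSL ℝ x))) x := hexponent.cexp
  rw [hphase.fderiv]
  simp only [smul_apply, neg_apply, ContinuousLinearMap.comp_apply, Complex.ofRealCLM_apply,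
    coe_innerSL_apply, nsmul_eq_mul, smul_eq_mul]
  push_cast
  ring

lemma fderiv_galileanPhase_mul_apply {t : ℝ} (ht : t ≠ 0) {f : E → ℂ} {x : E}
    (hf : DifferentiableAt ℝ f x) (v : E) :
    fderiv ℝ (fun y ↦ galileanPhase t y * f y) x v =
      galileanPhase t x * (-(Complex.I / (2 * t)) *
        (⟪x, v⟫_ℝ * f x + 2 * Complex.I * t * fderiv ℝ f x v)) := by
  have hfactor : -(Complex.I / (2 * t)) * (2 * Complex.I * t) = 1 := by
    have ht' : (t : ℂ) ≠ 0 := Complex.ofReal_ne_zero.mpr ht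
    field_simp
    rw [Complex.I_sq, neg_neg]
  have hphase : DifferentiableAt ℝ (galileanPhase t) x :=
    (contDiff_galileanPhase t (k := 1)).differentiable one_ne_zero x
  rw [fderiv_fun_mul hphase hf]
  simp only [add_apply, smul_apply, smul_eq_mul, fderiv_galileanPhase_apply]
  linear_combination -(galileanPhase t x * fderiv ℝ f x v) * hfactor

end GalileanPhase

section ConformalFactor

variable {n : ℕ}

/-- The vector field `x f + 2it ∇f`, that is, the conformal factor `x - 2pt` with `p = -i∇` applied
to `f`, as a function with values in `ℂⁿ`. -/
def conformalFactor (t : ℝ) (f : EuclideanSpace ℝ (Fin n) → ℂ) (x : EuclideanSpace ℝ (Fin n)) :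
    EuclideanSpace ℂ (Fin n) :=
  WithLp.toLp 2 fun i ↦ (x i : ℂ) * f x + 2 * Complex.I * (t : ℂ) * pd f i x

lemma norm_sq_conformalFactor (t : ℝ) (f : EuclideanSpace ℝ (Fin n) → ℂ)
    (x : EuclideanSpace ℝ (Fin n)) :
    ‖conformalFactor t f x‖ ^ 2 =
      ∑ i, ‖(x i : ℂ) * f x + 2 * Complex.I * (t : ℂ) * pd f i x‖ ^ 2 :=
  EuclideanSpace.norm_sq_eq _

lemma memLp_conformalFactor (t : ℝ) (f : 𝓢(EuclideanSpace ℝ (Fin n), ℂ)) (p : ℝ≥0∞) :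
    MemLp (conformalFactor t f) p := by
  refine MemLp.of_eval_piLp fun i ↦ ?_
  have hcoord : (fun x : EuclideanSpace ℝ (Fin n) ↦ x i).HasTemperateGrowth :=
    (EuclideanSpace.proj i : EuclideanSpace ℝ (Fin n) →L[ℝ] ℝ).hasTemperateGrowth
  let component : 𝓢(EuclideanSpace ℝ (Fin n), ℂ) :=
    smulLeftCLM ℂ (fun x : EuclideanSpace ℝ (Fin n) ↦ x i) f +
      (2 * Complex.I * (t : ℂ)) • ∂_{EuclideanSpace.single i (1 : ℝ)} f
  have hcomponent : (fun x ↦ conformalFactor t f x i) = component := by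
    ext x
    simp [component, conformalFactor, smulLeftCLM_apply_apply hcoord, lineDerivOp_apply_eq_fderiv,
      pd]
  exact hcomponent ▸ component.memLp p

lemma norm_fderiv_galileanPhase_mul_le {t : ℝ} (ht : t ≠ 0) {f : EuclideanSpace ℝ (Fin n) → ℂ}
    {x : EuclideanSpace ℝ (Fin n)} (hf : DifferentiableAt ℝ f x) :
    ‖fderiv ℝ (fun y ↦ galileanPhase t y * f y) x‖ ≤ 1 / (2 * |t|) * ‖conformalFactor t f x‖ := by
  have component_norm (i : Fin n) :
      ‖fderiv ℝ (fun y ↦ galileanPhase t y * f y) x (EuclideanSpace.single i 1)‖ =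
        1 / (2 * |t|) * ‖conformalFactor t f x i‖ := by
    rw [fderiv_galileanPhase_mul_apply ht hf, norm_galileanPhase_mul, norm_mul]
    simp [conformalFactor, pd, EuclideanSpace.inner_single_right]
  calc ‖fderiv ℝ (fun y ↦ galileanPhase t y * f y) x‖
      ≤ √(∑ i, (1 / (2 * |t|) * ‖conformalFactor t f x i‖) ^ 2) := by
        simpa only [EuclideanSpace.basisFun_apply, component_norm] using
          opNorm_le_sqrt_sum_sq_norm_apply (EuclideanSpace.basisFun (Fin n) ℝ)
            (fderiv ℝ (fun y ↦ galileanPhase t y * f y) x)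
    _ = 1 / (2 * |t|) * ‖conformalFactor t f x‖ := by
        simp only [mul_pow, ← Finset.mul_sum]
        rw [Real.sqrt_mul (by positivity), Real.sqrt_sq (by positivity), ← EuclideanSpace.norm_eq]

theorem eLpNorm_le_eLpNorm_conformalFactor {p : ℝ≥0} (hn : 0 < n)
    (hp : (p : ℝ)⁻¹ = 2⁻¹ - (n : ℝ)⁻¹) {t : ℝ} (ht : t ≠ 0) {f : EuclideanSpace ℝ (Fin n) → ℂ}
    (hf : ContDiff ℝ 1 f) (hf_memLp : MemLp f 2) :
    eLpNorm f p volume ≤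
      eLpNormLESNormFDerivOfEqInnerConst (volume : Measure (EuclideanSpace ℝ (Fin n))) 2 *
        (ENNReal.ofReal (1 / (2 * |t|)) * eLpNorm (conformalFactor t f) 2 volume) := by
  let u (y : EuclideanSpace ℝ (Fin n)) : ℂ := galileanPhase t y * f y
  have norm_u (y : EuclideanSpace ℝ (Fin n)) : ‖u y‖ = ‖f y‖ := norm_galileanPhase_mul t y (f y)
  have hu : ContDiff ℝ 1 u := (contDiff_galileanPhase t).mul hf
  have hu_memLp : MemLp u 2 :=
    hf_memLp.of_le hu.continuous.aestronglyMeasurable (.of_forall fun y ↦ (norm_u y).le)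
  calc eLpNorm f p volume
      = eLpNorm u p volume := eLpNorm_congr_norm_ae (.of_forall fun y ↦ (norm_u y).symm)
    _ ≤ eLpNormLESNormFDerivOfEqInnerConst volume 2 * eLpNorm (fderiv ℝ u) 2 volume :=
        eLpNorm_le_eLpNorm_fderiv_of_memLp volume one_le_two (by simpa) (by simpa) hu hu_memLp
    _ ≤ _ := by
        gcongr
        exact eLpNorm_le_mul_eLpNorm_of_ae_le_mul (.of_forall fun x ↦
          norm_fderiv_galileanPhase_mul_le ht (hf.differentiable one_ne_zero x)) 2

theorem L6_bound_by_conformal_factor_general {p : ℝ≥0} (hn : 2 < n)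
    (hp : (p : ℝ)⁻¹ = 2⁻¹ - (n : ℝ)⁻¹) :
    ∃ C : ℝ, 0 < C ∧ ∀ t : ℝ, t ≠ 0 → ∀ f : EuclideanSpace ℝ (Fin n) → ℂ,
      ContDiff ℝ 1 f → MemLp f 2 → MemLp (conformalFactor t f) 2 →
        (∫ x, ‖f x‖ ^ (p : ℝ)) ^ (1 / (p : ℝ)) ≤
          (C / |t|) * (∫ x, ‖conformalFactor t f x‖ ^ 2) ^ ((1 : ℝ) / 2) := by
  set K := eLpNormLESNormFDerivOfEqInnerConst (volume : Measure (EuclideanSpace ℝ (Fin n))) 2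
  have hp_ne : p ≠ 0 := by
    rintro rfl
    have : (n : ℝ)⁻¹ < 2⁻¹ := by gcongr; exact_mod_cast hn
    simp only [NNReal.coe_zero, inv_zero] at hp
    linarith
  refine ⟨(K + 1) / 2, by positivity, fun t ht f hf hf_memLp hconf ↦ ?_⟩
  have lpNorm_conf_nonneg : 0 ≤ lpNorm (conformalFactor t f) 2 volume := lpNorm_nonneg
  have lpNorm_bound : lpNorm f p volume ≤
      K * (1 / (2 * |t|) * lpNorm (conformalFactor t f) 2 volume) := by
    rw [← toReal_eLpNorm hf.continuous.aestronglyMeasurable]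
    refine ENNReal.toReal_le_of_le_ofReal (by positivity) ?_
    rw [ENNReal.ofReal_mul (by positivity), ENNReal.ofReal_mul (by positivity),
      ENNReal.ofReal_coe_nnreal, ofReal_lpNorm hconf]
    exact eLpNorm_le_eLpNorm_conformalFactor (by lia) hp ht hf hf_memLp
  calc (∫ x, ‖f x‖ ^ (p : ℝ)) ^ (1 / (p : ℝ))
      = lpNorm f p volume := by
        rw [lpNorm_nnreal_eq_integral_norm_rpow hp_ne hf.continuous.aestronglyMeasurable, one_div]
    _ ≤ K / 2 / |t| * lpNorm (conformalFactor t f) 2 volume :=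
        lpNorm_bound.trans_eq (by ring)
    _ ≤ (K + 1) / 2 / |t| * lpNorm (conformalFactor t f) 2 volume := by
        gcongr
        linarith
    _ = (K + 1) / 2 / |t| * (∫ x, ‖conformalFactor t f x‖ ^ 2) ^ ((1 : ℝ) / 2) := by
        rw [lpNorm_eq_integral_norm_rpow_toReal two_ne_zero ENNReal.ofNat_ne_top hconf.1]
        simp

end ConformalFactor

/-- The conformal factor controls the `L⁶` norm in dimension 3:
`‖f‖_{L⁶} ≤ (C/t) ‖(x−2pt)f‖_{L²}` for every `t > 0` and Schwartz `f`. -/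
theorem L6_bound_by_conformal_factor :
    ∃ C : ℝ, 0 < C ∧ ∀ t : ℝ, 0 < t →
      ∀ f : SchwartzMap (EuclideanSpace ℝ (Fin 3)) ℂ,
        (∫ x : EuclideanSpace ℝ (Fin 3), ‖f x‖ ^ 6) ^ ((1 : ℝ) / 6) ≤
          (C / t) * (∫ x : EuclideanSpace ℝ (Fin 3),
            ∑ i, ‖(x i : ℂ) * f x + 2 * Complex.I * (t : ℂ) * pd f i x‖ ^ 2)
              ^ ((1 : ℝ) / 2) := by
  obtain ⟨C, hC, bound⟩ := L6_bound_by_conformal_factor_general (n := 3) (p := 6) (by norm_num)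
    (by norm_num)
  refine ⟨C, hC, fun t ht f ↦ ?_⟩
  simpa [abs_of_pos ht, norm_sq_conformalFactor] using
    bound t ht.ne' f (f.smooth 1) (f.memLp 2) (memLp_conformalFactor t f 2)

end
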